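/- Let A, B ∈ ℚ and let f(z) = z³ + Az + B, viewed as a polynomial map ℂ → ℂ. If f is post-critically finite (every z ∈ ℂ with 3z² + A = 0 has finite forward orbit under f), then (A, B) is one of the seven pairs (−3, 0), (−3/2, 0), (−3/4, 3/4), (−3/4, −3/4), (0, 0), (3/2, 0), (3, 0). -/

import Mathlib

/-!
Let `±a` be the critical points, so that `f z = z³ - 3a²z + b` and `f (±a) = b ∓ 2a³`. A point of
finite orbit cannot lie in a forward-invariant region on which `f` increases some absolute value
strictly. This is used at every place.

* Nonarchimedean: put `R = max (1, v a, v b ^ (1/3))`. If `v z > R`, then `v (f z) = v z ^ 3 > v z`;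
  hence `v z ≤ R` for every `z` of finite orbit. As `4a³ = f (-a) - f a` and `2b = f a + f (-a)`,
  both have valuation at most `R`, which forces `v 2 * R ≤ 1`. Since this holds for all valuations,
  `2z` is an algebraic integer for every `z` of finite orbit.
* Archimedean: `|z|² ≤ 3|a|² + 2` for every `z` of finite orbit.

In particular `n = 4a²` and `m = 4b` are integers. The points `f (a)` and `f (-a)`, as well as their
images under `f`, are conjugate over `ℚ`, so that the symmetric functions of each pair are rational.
Their integrality gives congruences between `n` and `m`, and the archimedean bound gives
inequalities which leave finitely many pairs `(n, m)`.
-/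

namespace PCF

section FiniteOrbit

variable {α : Type*} {f : α → α} {x : α}

/-- The forward orbit of `x` under `f` is finite, that is, `x` is preperiodic. -/
def FiniteOrbit (f : α → α) (x : α) : Prop :=
  (Set.range fun n : ℕ => f^[n] x).Finite

lemma FiniteOrbit.apply (hx : FiniteOrbit f x) : FiniteOrbit f (f x) := by
  refine Set.Finite.subset hx ?_
  rintro _ ⟨n, rfl⟩
  exact ⟨n + 1, rfl⟩

lemma FiniteOrbit.notMem_of_mapsTo {Γ : Type*} [Preorder Γ] (hx : FiniteOrbit f x) {S : Set α}
    (hS : Set.MapsTo f S S) {N : α → Γ} (hN : ∀ y ∈ S, N y < N (f y)) : x ∉ S := by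
  intro hxS
  have hmono : StrictMono (N ∘ fun n : ℕ => f^[n] x) := strictMono_nat_of_lt_succ fun n => by
    simpa only [Function.comp_apply, Function.iterate_succ_apply'] using hN _ (hS.iterate n hxS)
  exact Set.infinite_range_of_injective hmono.injective.of_comp hx

end FiniteOrbit

section Cubic

variable {R : Type*} [CommRing R]

/-- Milnor's normal form of the monic centred cubic polynomial map with critical points `±a`. -/
def cubic (a b z : R) : R := z ^ 3 - 3 * a ^ 2 * z + b

/-- The cubic map `cubic a b` is post-critically finite: its critical points `±a` have finite
forward orbit. -/
structure IsPCF (a b : R) : Prop where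
  pos : FiniteOrbit (cubic a b) a
  neg : FiniteOrbit (cubic a b) (-a)

lemma cubic_self (a b : R) : cubic a b a = b - 2 * a ^ 3 := by
  simp only [cubic]; ring

lemma cubic_neg_self (a b : R) : cubic a b (-a) = b + 2 * a ^ 3 := by
  simp only [cubic]; ring

lemma IsPCF.finiteOrbit_sub {a b : R} (h : IsPCF a b) :
    FiniteOrbit (cubic a b) (b - 2 * a ^ 3) :=
  cubic_self a b ▸ h.pos.apply

lemma IsPCF.finiteOrbit_add {a b : R} (h : IsPCF a b) :
    FiniteOrbit (cubic a b) (b + 2 * a ^ 3) :=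
  cubic_neg_self a b ▸ h.neg.apply

end Cubic

section Valuation

variable {R Γ₀ : Type*} [CommRing R] [LinearOrderedCommGroupWithZero Γ₀] {v : Valuation R Γ₀}
  {a b z : R}

lemma valuation_cubic (ha : v a < v z) (hb : v b < v z ^ 3) : v (cubic a b z) = v z ^ 3 := by
  have hz : 0 < v z := zero_le.trans_lt ha
  have h3 : v 3 ≤ 1 := ofNat_mem v.integer 3
  have hlin : v (3 * a ^ 2 * z) < v (z ^ 3) := by
    simp only [map_mul, map_pow]
    calc v 3 * v a ^ 2 * v z ≤ 1 * v a ^ 2 * v z := by gcongr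
      _ < v z ^ 2 * v z := by rw [one_mul]; gcongr; exact zero_le
      _ = v z ^ 3 := (pow_succ _ _).symm
  have hlow : v (b - 3 * a ^ 2 * z) < v (z ^ 3) := v.map_sub_lt (by rwa [map_pow]) hlin
  rw [cubic, sub_add_eq_add_sub, add_sub_assoc, v.map_add_eq_of_lt_left hlow, map_pow]

lemma FiniteOrbit.valuation_le {ρ : Γ₀} (hz : FiniteOrbit (cubic a b) z) (hρ : 1 ≤ ρ)
    (ha : v a ≤ ρ) (hb : v b ≤ ρ ^ 3) : v z ≤ ρ := by
  have hgrow : ∀ y ∈ {y | ρ < v y}, v y < v (cubic a b y) := fun y hy => by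
    rw [valuation_cubic (ha.trans_lt hy) (hb.trans_lt (pow_lt_pow_left₀ hy zero_le three_ne_zero))]
    exact lt_self_pow₀ (hρ.trans_lt hy) (by norm_num)
  exact not_lt.1 (hz.notMem_of_mapsTo (fun y hy => hy.out.trans (hgrow y hy)) hgrow)

lemma IsPCF.valuation_two_mul_le_one {t : R} (h : IsPCF a (t ^ 3))
    (hz : FiniteOrbit (cubic a (t ^ 3)) z) : v (2 * z) ≤ 1 := by
  set ρ : Γ₀ := max 1 (max (v a) (v t)) with hρ
  have hρ1 : 1 ≤ ρ := le_max_left _ _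
  have hbound {w : R} (hw : FiniteOrbit (cubic a (t ^ 3)) w) : v w ≤ ρ :=
    hw.valuation_le hρ1 (by simp [hρ]) (by rw [map_pow]; gcongr; simp [hρ])
  have h2 : v 2 ≤ 1 := ofNat_mem v.integer 2
  have h2a : v 2 ^ 2 * v a ^ 3 ≤ ρ := by
    have := v.map_sub_le (hbound h.finiteOrbit_add) (hbound h.finiteOrbit_sub)
    rw [← map_pow, ← map_pow, ← map_mul]
    convert this using 2
    ring
  have h2t : v 2 ^ 2 * v t ^ 3 ≤ ρ := by
    have := v.map_add_le (hbound h.finiteOrbit_add) (hbound h.finiteOrbit_sub)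
    calc v 2 ^ 2 * v t ^ 3 ≤ v 2 * v t ^ 3 := by
          gcongr
          exact pow_le_of_le_one zero_le h2 two_ne_zero
      _ ≤ ρ := by
        rw [← map_pow, ← map_mul]
        convert this using 2
        ring
  have hcube : v 2 ^ 2 * ρ ^ 3 ≤ ρ := by
    obtain h1 | h1 | h1 : ρ = 1 ∨ ρ = v a ∨ ρ = v t := by
      rw [hρ]
      rcases max_choice 1 (max (v a) (v t)) with h1 | h1
      · exact .inl h1
      · rw [h1]; exact .inr (max_choice _ _)
    · simpa [h1] using pow_le_one₀ zero_le h2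
    · rwa [← h1] at h2a
    · rwa [← h1] at h2t
  have hsq : (v 2 * ρ) ^ 2 ≤ 1 := by
    refine le_of_mul_le_mul_right ?_ (zero_lt_one.trans_le hρ1)
    calc (v 2 * ρ) ^ 2 * ρ = v 2 ^ 2 * ρ ^ 3 := by rw [mul_pow, mul_assoc, ← pow_succ]
      _ ≤ 1 * ρ := by rwa [one_mul]
  rw [map_mul]
  exact (mul_le_mul_right (hbound hz) _).trans ((pow_le_one_iff two_ne_zero).1 hsq)

end Valuation

section Integrality

variable {K : Type*} [Field K]

lemma isIntegral_of_forall_mem_valuationSubring {R : Type*} [CommRing R] [Algebra R K] {z : K}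
    (h : ∀ V : ValuationSubring K, (∀ r, algebraMap R K r ∈ V) → z ∈ V) : IsIntegral R z := by
  by_contra hz
  obtain ⟨V, hV, hzV⟩ :=
    (integralClosure R K).toSubring.exists_le_valuationSubring_of_isIntegrallyClosedIn hz
  exact hzV (h V fun r => hV ((integralClosure R K).algebraMap_mem r))

lemma IsPCF.isIntegral_two_mul [IsAlgClosed K] {a b z : K} (h : IsPCF a b)
    (hz : FiniteOrbit (cubic a b) z) : IsIntegral ℤ (2 * z) := by
  obtain ⟨t, rfl⟩ : ∃ t : K, t ^ 3 = b := IsAlgClosed.exists_pow_nat_eq b (by norm_num)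
  exact isIntegral_of_forall_mem_valuationSubring fun V _ =>
    (V.valuation_le_one_iff _).1 (h.valuation_two_mul_le_one hz)

lemma IsPCF.exists_int_four_mul_sq [IsAlgClosed K] [CharZero K] {a b : K} (h : IsPCF a b)
    (ha : ∃ q : ℚ, a ^ 2 = q) : ∃ n : ℤ, 4 * a ^ 2 = n := by
  have hint : IsIntegral ℤ (4 * a ^ 2) := by
    rw [show 4 * a ^ 2 = (2 * a) ^ 2 by ring]
    exact (h.isIntegral_two_mul h.pos).pow 2
  obtain ⟨q, hq⟩ := ha
  exact hint.exists_int_iff_exists_rat.1 ⟨4 * q, by rw [hq]; push_cast; rfl⟩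

lemma IsPCF.exists_int_four_mul [IsAlgClosed K] [CharZero K] {a b : K} (h : IsPCF a b)
    (hb : ∃ q : ℚ, b = q) : ∃ m : ℤ, 4 * b = m := by
  have hint : IsIntegral ℤ (4 * b) := by
    rw [show 4 * b = 2 * (b - 2 * a ^ 3) + 2 * (b + 2 * a ^ 3) by ring]
    exact (h.isIntegral_two_mul h.finiteOrbit_sub).add
      (h.isIntegral_two_mul h.finiteOrbit_add)
  obtain ⟨q, rfl⟩ := hb
  exact hint.exists_int_iff_exists_rat.1 ⟨4 * q, by push_cast; rfl⟩

lemma dvd_of_isIntegral [CharZero K] {x : K} {d k : ℤ} (hx : IsIntegral ℤ x)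
    (hd : (d : K) * x = k) : d ∣ k := by
  rcases eq_or_ne d 0 with rfl | hd0
  · simpa [eq_comm] using hd
  · have hd0' : (d : K) ≠ 0 := Int.cast_ne_zero.2 hd0
    obtain ⟨c, rfl⟩ := hx.exists_int_iff_exists_rat.1 ⟨k / d, by
      push_cast; rw [eq_div_iff hd0', mul_comm, hd]⟩
    exact ⟨c, by exact_mod_cast hd.symm⟩

end Integrality

section Norm

lemma norm_lt_norm_cubic {K : Type*} [NormedField K] {a b z : K} (hb : ‖b‖ ≤ ‖z‖)
    (hz : 3 * ‖a‖ ^ 2 + 2 < ‖z‖ ^ 2) : ‖z‖ < ‖cubic a b z‖ := by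
  have hz0 : 0 < ‖z‖ := by
    refine (norm_nonneg z).lt_of_ne' fun h0 => ?_
    rw [h0] at hz
    nlinarith [sq_nonneg ‖a‖]
  have h3 : ‖(3 : K)‖ ≤ 3 := by simpa using Nat.norm_cast_le (α := K) 3
  have hlin : ‖3 * a ^ 2 * z‖ ≤ 3 * ‖a‖ ^ 2 * ‖z‖ := by
    rw [norm_mul, norm_mul, norm_pow]
    gcongr
  have hcube : ‖z‖ ^ 3 ≤ ‖cubic a b z‖ + ‖3 * a ^ 2 * z‖ + ‖b‖ := by
    calc ‖z‖ ^ 3 = ‖cubic a b z + 3 * a ^ 2 * z - b‖ := by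
          rw [← norm_pow]; congr 1; simp only [cubic]; ring
      _ ≤ ‖cubic a b z‖ + ‖3 * a ^ 2 * z‖ + ‖b‖ :=
        (norm_sub_le _ _).trans (by gcongr; exact norm_add_le _ _)
  have hmul : (3 * ‖a‖ ^ 2 + 2) * ‖z‖ < ‖z‖ ^ 2 * ‖z‖ := by gcongr
  linarith [pow_succ ‖z‖ 2]

variable {𝕜 : Type*} [RCLike 𝕜] {a b z : 𝕜}

lemma FiniteOrbit.norm_sq_le_of_norm_le (hz : FiniteOrbit (cubic a b) z) (hb : ‖b‖ ≤ ‖z‖) :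
    ‖z‖ ^ 2 ≤ 3 * ‖a‖ ^ 2 + 2 := by
  have hgrow : ∀ y ∈ {y | ‖b‖ ≤ ‖y‖ ∧ 3 * ‖a‖ ^ 2 + 2 < ‖y‖ ^ 2}, ‖y‖ < ‖cubic a b y‖ :=
    fun y hy => norm_lt_norm_cubic hy.1 hy.2
  by_contra! hlt
  refine hz.notMem_of_mapsTo (fun y hy => ?_) hgrow ⟨hb, hlt⟩
  have := hgrow y hy
  exact ⟨hy.1.trans this.le, hy.2.trans (by gcongr)⟩

lemma IsPCF.norm_sq_le (h : IsPCF a b) (hz : FiniteOrbit (cubic a b) z) :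
    ‖z‖ ^ 2 ≤ 3 * ‖a‖ ^ 2 + 2 := by
  rcases le_total ‖b‖ ‖z‖ with hbz | hzb
  · exact hz.norm_sq_le_of_norm_le hbz
  · -- One of the two critical values is at least as large as their mean `b`.
    obtain ⟨w, hw, hbw⟩ : ∃ w, FiniteOrbit (cubic a b) w ∧ ‖b‖ ≤ ‖w‖ := by
      by_contra! hsmall
      have hsub := hsmall _ h.finiteOrbit_sub
      have hadd := hsmall _ h.finiteOrbit_add
      have htri := norm_add_le (b - 2 * a ^ 3) (b + 2 * a ^ 3)
      rw [sub_add_add_cancel, ← two_mul, norm_mul, RCLike.norm_two] at htri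
      linarith
    calc ‖z‖ ^ 2 ≤ ‖w‖ ^ 2 := by gcongr; exact hzb.trans hbw
      _ ≤ 3 * ‖a‖ ^ 2 + 2 := hw.norm_sq_le_of_norm_le hbw

lemma IsPCF.norm_add_sq_add_norm_sub_sq_le {w : 𝕜} (h : IsPCF a b)
    (hz : FiniteOrbit (cubic a b) z) (hw : FiniteOrbit (cubic a b) w) :
    ‖z + w‖ ^ 2 + ‖z - w‖ ^ 2 ≤ 4 * (3 * ‖a‖ ^ 2 + 2) := by
  have hpar := parallelogram_law_with_norm 𝕜 z w
  linarith [h.norm_sq_le hz, h.norm_sq_le hw]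

lemma IsPCF.abs_add_abs_le {w : 𝕜} (h : IsPCF a b) {n s d : ℤ} {c : ℕ} (ha : 4 * a ^ 2 = n)
    (hz : FiniteOrbit (cubic a b) z) (hw : FiniteOrbit (cubic a b) w)
    (hs : c * (z + w) ^ 2 = s) (hd : c * (z - w) ^ 2 = d) :
    |s| + |d| ≤ c * (3 * |n| + 8) := by
  have hcast (k : ℤ) : ‖(k : 𝕜)‖ = |(k : ℝ)| := by
    rw [← RCLike.ofReal_intCast, RCLike.norm_ofReal]
  have hna : 4 * ‖a‖ ^ 2 = |(n : ℝ)| := by simpa [hcast] using congrArg norm ha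
  have hns : c * ‖z + w‖ ^ 2 = |(s : ℝ)| := by simpa [hcast] using congrArg norm hs
  have hnd : c * ‖z - w‖ ^ 2 = |(d : ℝ)| := by simpa [hcast] using congrArg norm hd
  have key : |(s : ℝ)| + |(d : ℝ)| ≤ c * (3 * |(n : ℝ)| + 8) := by
    calc |(s : ℝ)| + |(d : ℝ)| = c * (‖z + w‖ ^ 2 + ‖z - w‖ ^ 2) := by rw [mul_add, hns, hnd]
      _ ≤ c * (4 * (3 * ‖a‖ ^ 2 + 2)) := by
        gcongr; exact h.norm_add_sq_add_norm_sub_sq_le hz hw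
      _ = c * (3 * |(n : ℝ)| + 8) := by rw [← hna]; ring
  exact_mod_cast key

end Norm

section IntegralCoordinates

variable {a b : ℂ} {n m : ℤ}

-- `(m² - n³) / 4` is the product of the algebraic integers `2 f (a)` and `2 f (-a)`.
lemma IsPCF.four_dvd_sq_sub_cube (h : IsPCF a b) (ha : 4 * a ^ 2 = n) (hb : 4 * b = m) :
    4 ∣ m ^ 2 - n ^ 3 := by
  refine dvd_of_isIntegral ((h.isIntegral_two_mul h.finiteOrbit_sub).mul
    (h.isIntegral_two_mul h.finiteOrbit_add)) ?_
  push_cast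
  rw [← ha, ← hb]
  ring

-- The right-hand side is `16` times the sum of the algebraic integers `2 f (f (a))` and
-- `2 f (f (-a))`.
lemma IsPCF.sixteen_dvd_mul (h : IsPCF a b) (ha : 4 * a ^ 2 = n) (hb : 4 * b = m) :
    16 ∣ m * (m ^ 2 + 3 * n ^ 3 - 12 * n + 16) := by
  refine dvd_of_isIntegral ((h.isIntegral_two_mul h.finiteOrbit_sub.apply).add
    (h.isIntegral_two_mul h.finiteOrbit_add.apply)) ?_
  simp only [cubic]
  push_cast
  rw [← ha, ← hb]
  ring

lemma IsPCF.sq_add_abs_cube_le (h : IsPCF a b) (ha : 4 * a ^ 2 = n) (hb : 4 * b = m) :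
    m ^ 2 + |n| ^ 3 ≤ 4 * (3 * |n| + 8) := by
  have key := h.abs_add_abs_le (c := 4) (s := m ^ 2) (d := n ^ 3) ha
    h.finiteOrbit_sub h.finiteOrbit_add
    (by push_cast; rw [← hb]; ring) (by push_cast; rw [← ha]; ring)
  simpa only [abs_pow, sq_abs, Nat.cast_ofNat] using key

lemma IsPCF.sq_add_abs_cube_mul_sq_le (h : IsPCF a b) (ha : 4 * a ^ 2 = n) (hb : 4 * b = m) :
    (m * (m ^ 2 + 3 * n ^ 3 - 12 * n + 16)) ^ 2 + |n| ^ 3 * (3 * m ^ 2 + n ^ 3 - 12 * n) ^ 2 ≤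
      1024 * (3 * |n| + 8) := by
  have key := h.abs_add_abs_le (c := 1024) (s := (m * (m ^ 2 + 3 * n ^ 3 - 12 * n + 16)) ^ 2)
    (d := n ^ 3 * (3 * m ^ 2 + n ^ 3 - 12 * n) ^ 2) ha
    h.finiteOrbit_sub.apply h.finiteOrbit_add.apply
    (by simp only [cubic]; push_cast; rw [← ha, ← hb]; ring)
    (by simp only [cubic]; push_cast; rw [← ha, ← hb]; ring)
  simpa only [abs_mul _ (_ ^ 2), abs_pow, sq_abs, Nat.cast_ofNat] using key

lemma mem_Icc_of_sq_add_abs_cube_le (h : m ^ 2 + |n| ^ 3 ≤ 4 * (3 * |n| + 8)) :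
    n ∈ Finset.Icc (-4) 4 ∧ m ∈ Finset.Icc (-8) 8 := by
  have hn : |n| ≤ 4 := by
    by_contra! hlt
    nlinarith [sq_nonneg m, pow_le_pow_left₀ (by norm_num) (Int.add_one_le_of_lt hlt) 2]
  have hm : |m| < 9 := by
    refine abs_lt_of_sq_lt_sq ?_ (by norm_num)
    linarith [pow_nonneg (abs_nonneg n) 3]
  exact ⟨Finset.mem_Icc.2 (abs_le.1 hn), Finset.mem_Icc.2 (abs_le.1 (Int.lt_add_one_iff.1 hm))⟩

lemma mem_of_dvd_of_le : ∀ n ∈ Finset.Icc (-4 : ℤ) 4, ∀ m ∈ Finset.Icc (-8 : ℤ) 8,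
    4 ∣ m ^ 2 - n ^ 3 → 16 ∣ m * (m ^ 2 + 3 * n ^ 3 - 12 * n + 16) →
    (m * (m ^ 2 + 3 * n ^ 3 - 12 * n + 16)) ^ 2 + |n| ^ 3 * (3 * m ^ 2 + n ^ 3 - 12 * n) ^ 2 ≤
      1024 * (3 * |n| + 8) →
    (n, m) ∈ [(4, 0), (2, 0), (1, 3), (1, -3), (0, 0), (-2, 0), (-4, 0)] := by
  decide +kernel

theorem IsPCF.mem_of_four_mul_eq (h : IsPCF a b) (ha : 4 * a ^ 2 = n) (hb : 4 * b = m) :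
    (n, m) ∈ [(4, 0), (2, 0), (1, 3), (1, -3), (0, 0), (-2, 0), (-4, 0)] := by
  obtain ⟨hn, hm⟩ := mem_Icc_of_sq_add_abs_cube_le (h.sq_add_abs_cube_le ha hb)
  exact mem_of_dvd_of_le n hn m hm (h.four_dvd_sq_sub_cube ha hb) (h.sixteen_dvd_mul ha hb)
    (h.sq_add_abs_cube_mul_sq_le ha hb)

end IntegralCoordinates

/-- If `A, B ∈ ℚ` and `f(z) = z³ + Az + B` is post-critically finite as
a map `ℂ → ℂ` (every root of `3z² + A` has finite forward orbit), then `(A, B)` is one of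
the seven pairs `(-3,0)`, `(-3/2,0)`, `(-3/4,3/4)`, `(-3/4,-3/4)`, `(0,0)`, `(3/2,0)`,
`(3,0)`. -/
theorem rational_pcf_cubic_classification (A B : ℚ)
    (hpcf : ∀ z : ℂ, 3 * z ^ 2 + (A : ℂ) = 0 →
      (Set.range fun n : ℕ => (fun w : ℂ => w ^ 3 + (A : ℂ) * w + (B : ℂ))^[n] z).Finite) :
    (A, B) = (-3, 0) ∨ (A, B) = (-3/2, 0) ∨ (A, B) = (-3/4, 3/4) ∨
      (A, B) = (-3/4, -3/4) ∨ (A, B) = (0, 0) ∨ (A, B) = (3/2, 0) ∨ (A, B) = (3, 0) := by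
  obtain ⟨a, ha⟩ : ∃ a : ℂ, a ^ 2 = -A / 3 := IsAlgClosed.exists_pow_nat_eq _ two_pos
  have hcubic : (fun w : ℂ => w ^ 3 + (A : ℂ) * w + (B : ℂ)) = cubic a (B : ℂ) := by
    funext w
    rw [cubic, ha]
    ring
  rw [hcubic] at hpcf
  have h : IsPCF a (B : ℂ) := ⟨hpcf a (by rw [ha]; ring), hpcf (-a) (by rw [neg_sq, ha]; ring)⟩
  obtain ⟨n, hn⟩ := h.exists_int_four_mul_sq ⟨-A / 3, by rw [ha]; push_cast; rfl⟩
  obtain ⟨m, hm⟩ := h.exists_int_four_mul ⟨B, rfl⟩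
  obtain rfl : A = -3 * n / 4 := by
    rw [ha] at hn
    have : (A : ℂ) = (-3 * n / 4 : ℚ) := by push_cast; linear_combination -3 / 4 * hn
    exact_mod_cast this
  obtain rfl : B = m / 4 := by
    have : (B : ℂ) = (m / 4 : ℚ) := by push_cast; linear_combination hm / 4
    exact_mod_cast this
  have hmem := h.mem_of_four_mul_eq hn hm
  simp only [List.mem_cons, List.not_mem_nil, or_false, Prod.mk.injEq] at hmem ⊢
  rcases hmem with ⟨rfl, rfl⟩ | ⟨rfl, rfl⟩ | ⟨rfl, rfl⟩ | ⟨rfl, rfl⟩ | ⟨rfl, rfl⟩ | ⟨rfl, rfl⟩ |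
    ⟨rfl, rfl⟩ <;> norm_num

end PCF
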